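/- For every T = (𝐛,𝐫,𝐬) ∈ Tri^B_0(n,d) one has ∇(ξ_T) = Σ_{(T¹,T²) ∈ Spl(T)} (−1)^{⟨σ^T_{T¹,T²};𝐛⟩} ξ_{T¹} ⊗ ξ_{T²}. In particular, ∇(S^A(n,d)) ⊆ ⊕_{l=0}^d S^A(n,l) ⊗ S^A(n,d−l), so S^A(n) := ⊕_{d≥0} S^A(n,d) is a sub-supercoalgebra of ⊕_{d≥0} M_n(A)^{⊗d}. -/

import Mathlib

open Finset

open scoped Classical TensorProduct

noncomputable section

namespace GS

/-- A *good pair* `(A, 𝔞)`: a `𝕜`-superalgebra `A = ev ⊕ od` which is free as a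
`𝕜`-supermodule, together with a subalgebra `𝔞 = aa ⊆ A₀` such that `𝔞` and `A/𝔞` are free,
a complement `𝔠 = cc` of `𝔞` in `A₀`, and an `(A,𝔞)`-basis `B = B_𝔞 ⊔ B_𝔠 ⊔ B_1`
(encoded by `bas : Basis β 𝕜 A` with the partition `part : β → Fin 3`,
where `0` = `B_𝔞`, `1` = `B_𝔠`, `2` = `B_1`). -/
structure GoodPair (𝕜 A β : Type) [CommRing 𝕜] [NonUnitalRing A] [Module 𝕜 A] : Type where
  ev : Submodule 𝕜 A
  od : Submodule 𝕜 A
  compl : IsCompl ev od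
  mul_ee : ∀ a ∈ ev, ∀ b ∈ ev, a * b ∈ ev
  mul_eo : ∀ a ∈ ev, ∀ b ∈ od, a * b ∈ od
  mul_oe : ∀ a ∈ od, ∀ b ∈ ev, a * b ∈ od
  mul_oo : ∀ a ∈ od, ∀ b ∈ od, a * b ∈ ev
  free_ev : Module.Free 𝕜 ev
  free_od : Module.Free 𝕜 od
  aa : Submodule 𝕜 A
  aa_le_ev : aa ≤ ev
  aa_mul : ∀ a ∈ aa, ∀ b ∈ aa, a * b ∈ aa
  free_aa : Module.Free 𝕜 aa
  free_quot : Module.Free 𝕜 (A ⧸ aa)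
  cc : Submodule 𝕜 A
  aa_inf_cc : aa ⊓ cc = ⊥
  aa_sup_cc : aa ⊔ cc = ev
  bas : Module.Basis β 𝕜 A
  part : β → Fin 3
  bas_mem_aa : ∀ i, part i = 0 → bas i ∈ aa
  bas_mem_cc : ∀ i, part i = 1 → bas i ∈ cc
  bas_mem_od : ∀ i, part i = 2 → bas i ∈ od

variable {𝕜 A β : Type} [CommRing 𝕜] [NonUnitalRing A] [Module 𝕜 A]

/-- An element is homogeneous if it lies in the even or the odd part. -/
def Homog (P : GoodPair 𝕜 A β) (a : A) : Prop := a ∈ P.ev ∨ a ∈ P.od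

/-- `H`, the set of nonzero homogeneous elements of `A`. -/
def Hset (P : GoodPair 𝕜 A β) : Set A := {a | Homog P a ∧ a ≠ 0}

/-- `⟨𝐚,𝐜⟩ = #{(k,l) : k > l, a_k odd, c_l odd}` (the Koszul sign count). -/
def koz (od : Submodule 𝕜 A) {d : ℕ} (a c : Fin d → A) : ℕ :=
  (univ.filter fun kl : Fin d × Fin d => kl.2 < kl.1 ∧ a kl.1 ∈ od ∧ c kl.2 ∈ od).card

/-- `⟨σ;𝐚⟩ = #{(k,l) : k < l, σ⁻¹k > σ⁻¹l, a_k and a_l odd}`. -/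
def sgnc (od : Submodule 𝕜 A) {d : ℕ} (σ : Equiv.Perm (Fin d)) (a : Fin d → A) : ℕ :=
  (univ.filter fun kl : Fin d × Fin d =>
    kl.1 < kl.2 ∧ σ⁻¹ kl.2 < σ⁻¹ kl.1 ∧ a kl.1 ∈ od ∧ a kl.2 ∈ od).card

/-- `⟨𝐚,𝐫,𝐬⟩ = #{(k,l) : k < l, a_k, a_l odd, (a_k,r_k,s_k) > (a_l,r_l,s_l)}` with respect to
the fixed total order `ord` on `A × [1,n] × [1,n]`. -/
def ang {n : ℕ} (od : Submodule 𝕜 A) (ord : LinearOrder (A × Fin n × Fin n))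
    {d : ℕ} (a : Fin d → A) (r s : Fin d → Fin n) : ℕ :=
  (univ.filter fun kl : Fin d × Fin d =>
    kl.1 < kl.2 ∧ a kl.1 ∈ od ∧ a kl.2 ∈ od ∧
      ord.lt (a kl.2, r kl.2, s kl.2) (a kl.1, r kl.1, s kl.1)).card

/-- `(𝐚,𝐫,𝐬) ∈ Tri^H(n,d)`: all entries are nonzero homogeneous, and a repeated entry
triple forces evenness. -/
def IsTriH (P : GoodPair 𝕜 A β) {n d : ℕ} (a : Fin d → A) (r s : Fin d → Fin n) : Prop :=
  (∀ k, a k ∈ Hset P) ∧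
    ∀ k l : Fin d, k ≠ l → (a k, r k, s k) = (a l, r l, s l) → a k ∈ P.ev

/-- `(𝐛,𝐫,𝐬) ∈ Tri^B(n,d)` for words of basis elements. -/
def IsTriB (P : GoodPair 𝕜 A β) {n d : ℕ} (b : Fin d → β) (r s : Fin d → Fin n) : Prop :=
  ∀ k l : Fin d, k ≠ l → ((b k, r k, s k) : β × Fin n × Fin n) = (b l, r l, s l) →
    P.part (b k) ≠ 2

/-- Minimal length representatives of the cosets `(S_e × S_f)\S_{e+f}`. -/
def IsShuffle (e f : ℕ) (σ : Equiv.Perm (Fin (e + f))) : Prop :=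
  (∀ k l : Fin (e + f), k < l → (l : ℕ) < e → σ⁻¹ k < σ⁻¹ l) ∧
  (∀ k l : Fin (e + f), k < l → e ≤ (k : ℕ) → σ⁻¹ k < σ⁻¹ l)

/-- The tower of superalgebras `M_n(A)^{⊗d}`, `d ≥ 0`, axiomatised.  `X a r s` is the pure
tensor `ξ^{a_1}_{r_1,s_1} ⊗ ⋯ ⊗ ξ^{a_d}_{r_d,s_d}` of matrix units; it is multilinear in the
`A`-entries, the pure tensors of basis elements form a basis, multiplication is the sign-twisted
(Koszul) componentwise one, `act` is the right action of the symmetric groups by superalgebra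
automorphisms, `evT/odT` is the induced supermodule structure, `star` is the `*`-(shuffle)
product and `nab` gives the components of the deconcatenation coproduct `∇`. -/
structure Tower (𝕜 A β : Type) [CommRing 𝕜] [NonUnitalRing A] [Module 𝕜 A]
    (n : ℕ) (T : ℕ → Type) [∀ e, NonUnitalRing (T e)] [∀ e, Module 𝕜 (T e)]
    (P : GoodPair 𝕜 A β) : Type where
  X : ∀ {e : ℕ}, (Fin e → A) → (Fin e → Fin n) → (Fin e → Fin n) → T e
  X_update_add : ∀ {e : ℕ} (a : Fin e → A) (r s : Fin e → Fin n) (k : Fin e) (x y : A),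
    X (Function.update a k (x + y)) r s
      = X (Function.update a k x) r s + X (Function.update a k y) r s
  X_update_smul : ∀ {e : ℕ} (a : Fin e → A) (r s : Fin e → Fin n) (k : Fin e) (c : 𝕜) (x : A),
    X (Function.update a k (c • x)) r s = c • X (Function.update a k x) r s
  bas : ∀ e : ℕ, Module.Basis ((Fin e → β) × (Fin e → Fin n) × (Fin e → Fin n)) 𝕜 (T e)
  bas_eq : ∀ (e : ℕ) (b : Fin e → β) (r s : Fin e → Fin n),
    bas e (b, r, s) = X (fun k => P.bas (b k)) r s
  X_mul : ∀ {e : ℕ} (a c : Fin e → A) (r s t u : Fin e → Fin n),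
    (∀ k, Homog P (a k)) → (∀ k, Homog P (c k)) →
    X a r s * X c t u
      = if s = t then ((-1 : ℤ) ^ koz P.od a c) • X (fun k => a k * c k) r u else 0
  act : ∀ {e : ℕ}, Equiv.Perm (Fin e) → T e →ₗ[𝕜] T e
  act_act : ∀ {e : ℕ} (σ τ : Equiv.Perm (Fin e)) (x : T e), act τ (act σ x) = act (σ * τ) x
  act_mul : ∀ {e : ℕ} (σ : Equiv.Perm (Fin e)) (x y : T e), act σ (x * y) = act σ x * act σ y
  act_X : ∀ {e : ℕ} (σ : Equiv.Perm (Fin e)) (a : Fin e → A) (r s : Fin e → Fin n),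
    (∀ k, Homog P (a k)) →
    act σ (X a r s) = ((-1 : ℤ) ^ sgnc P.od σ a) • X (a ∘ σ) (r ∘ σ) (s ∘ σ)
  evT : ∀ e : ℕ, Submodule 𝕜 (T e)
  odT : ∀ e : ℕ, Submodule 𝕜 (T e)
  complT : ∀ e : ℕ, IsCompl (evT e) (odT e)
  X_mem_evT : ∀ {e : ℕ} (a : Fin e → A) (r s : Fin e → Fin n), (∀ k, Homog P (a k)) →
    Even (univ.filter fun k => a k ∈ P.od).card → X a r s ∈ evT e
  X_mem_odT : ∀ {e : ℕ} (a : Fin e → A) (r s : Fin e → Fin n), (∀ k, Homog P (a k)) →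
    ¬ Even (univ.filter fun k => a k ∈ P.od).card → X a r s ∈ odT e
  star : ∀ {e f : ℕ}, T e →ₗ[𝕜] T f →ₗ[𝕜] T (e + f)
  star_X : ∀ {e f : ℕ} (a : Fin e → A) (r s : Fin e → Fin n)
      (c : Fin f → A) (t u : Fin f → Fin n),
    star (X a r s) (X c t u)
      = ∑ σ ∈ univ.filter (IsShuffle e f),
          act σ (X (Fin.append a c) (Fin.append r t) (Fin.append s u))
  nab : ∀ e f : ℕ, T (e + f) →ₗ[𝕜] TensorProduct 𝕜 (T e) (T f)
  nab_X : ∀ (e f : ℕ) (a : Fin (e + f) → A) (r s : Fin (e + f) → Fin n),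
    nab e f (X a r s)
      = (X (a ∘ Fin.castAdd f) (r ∘ Fin.castAdd f) (s ∘ Fin.castAdd f))
          ⊗ₜ[𝕜] (X (a ∘ Fin.natAdd e) (r ∘ Fin.natAdd e) (s ∘ Fin.natAdd e))

variable {n : ℕ} {T : ℕ → Type} [∀ e, NonUnitalRing (T e)] [∀ e, Module 𝕜 (T e)]

/-- `ξ^𝐚_{𝐫,𝐬}`, the signed sum of the pure tensors over the `S_d`-orbit of `(𝐚,𝐫,𝐬)`. -/
def xiH {P : GoodPair 𝕜 A β} (D : Tower 𝕜 A β n T P) (ord : LinearOrder (A × Fin n × Fin n))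
    {d : ℕ} (a : Fin d → A) (r s : Fin d → Fin n) : T d :=
  ∑ w ∈ (univ.image fun σ : Equiv.Perm (Fin d) => (a ∘ σ, r ∘ σ, s ∘ σ)),
    ((-1 : ℤ) ^ (ang P.od ord a r s + ang P.od ord w.1 w.2.1 w.2.2)) • D.X w.1 w.2.1 w.2.2

/-- `ξ^𝐛_{𝐫,𝐬}` for a word `𝐛` of basis elements. -/
def xiB {P : GoodPair 𝕜 A β} (D : Tower 𝕜 A β n T P) (ord : LinearOrder (A × Fin n × Fin n))
    {d : ℕ} (b : Fin d → β) (r s : Fin d → Fin n) : T d :=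
  xiH D ord (fun k => P.bas (b k)) r s

/-- `[𝐛,𝐫,𝐬]^b_{r,s}`, the multiplicity of an entry triple in a word triple. -/
def mco {n d : ℕ} (b : Fin d → β) (r s : Fin d → Fin n) (w : β × Fin n × Fin n) : ℕ :=
  (univ.filter fun k => ((b k, r k, s k) : β × Fin n × Fin n) = w).card

/-- `∏ ([𝐛,𝐫,𝐬]^b_{r,s})!` over the entry triples whose basis element satisfies `sel`
(e.g. `sel i = (part i = 1)` gives `[𝐛,𝐫,𝐬]^!_𝔠`). -/
def facSel (sel : β → Prop) {n d : ℕ} (b : Fin d → β) (r s : Fin d → Fin n) : ℕ :=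
  ∏ w ∈ ((univ.image fun k => ((b k, r k, s k) : β × Fin n × Fin n)).filter fun w => sel w.1),
    Nat.factorial (mco b r s w)

/-- `η^𝐛_{𝐫,𝐬} := [𝐛,𝐫,𝐬]^!_𝔠 • ξ^𝐛_{𝐫,𝐬}`. -/
def eta {P : GoodPair 𝕜 A β} (D : Tower 𝕜 A β n T P) (ord : LinearOrder (A × Fin n × Fin n))
    {d : ℕ} (b : Fin d → β) (r s : Fin d → Fin n) : T d :=
  facSel (fun i => P.part i = 1) b r s • xiB D ord b r s

/-- `S^A(n,d) = (M_n(A)^{⊗d})^{S_d}`, the invariants. -/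
def SchurS {P : GoodPair 𝕜 A β} (D : Tower 𝕜 A β n T P) (d : ℕ) : Submodule 𝕜 (T d) where
  carrier := {x | ∀ σ : Equiv.Perm (Fin d), D.act σ x = x}
  add_mem' := by
    intro x y hx hy σ
    rw [map_add, hx σ, hy σ]
  zero_mem' := by
    intro σ; exact map_zero _
  smul_mem' := by
    intro c x hx σ
    rw [map_smul, hx σ]

/-- The generalized Schur algebra `T^A_𝔞(n,d)`, the `𝕜`-span of the `η^𝐛_{𝐫,𝐬}`,
`(𝐛,𝐫,𝐬) ∈ Tri^B(n,d)`. -/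
def SchurT {P : GoodPair 𝕜 A β} (D : Tower 𝕜 A β n T P) (ord : LinearOrder (A × Fin n × Fin n))
    (d : ℕ) : Submodule 𝕜 (T d) :=
  Submodule.span 𝕜 {x | ∃ b r s, IsTriB P b r s ∧ x = eta D ord b r s}

/-- `S^𝔞(n,d) = (M_n(𝔞)^{⊗d})^{S_d} ⊆ S^A(n,d)`. -/
def SchurA {P : GoodPair 𝕜 A β} (D : Tower 𝕜 A β n T P) (d : ℕ) : Submodule 𝕜 (T d) :=
  Submodule.span 𝕜 {x | ∃ a r s, (∀ k, a k ∈ P.aa) ∧ x = D.X a r s} ⊓ SchurS D d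

/-- `ξ^f = E^f ⊗ ⋯ ⊗ E^f` for `f ∈ A`. -/
def xiIdem {P : GoodPair 𝕜 A β} (D : Tower 𝕜 A β n T P) (f : A) (d : ℕ) : T d :=
  ∑ r : Fin d → Fin n, D.X (fun _ => f) r r

/-- Transport along an equality of degrees. -/
def tcast {e f : ℕ} (h : e = f) : T e ≃ₗ[𝕜] T f := by
  subst h; exact LinearEquiv.refl 𝕜 (T e)

/-- Iterated `*`-product `x_1 * x_2 * ⋯ * x_d` of degree-one pure tensors read off from a
word (associated to the left). -/
def starIter {P : GoodPair 𝕜 A β} (D : Tower 𝕜 A β n T P) :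
    ∀ (e : ℕ), (Fin e → A) → (Fin e → Fin n) → (Fin e → Fin n) → T e
  | 0, _, _, _ => D.X Fin.elim0 Fin.elim0 Fin.elim0
  | (e + 1), a, r, s =>
      D.star (starIter D e (a ∘ Fin.castSucc) (r ∘ Fin.castSucc) (s ∘ Fin.castSucc))
        (D.X (fun _ : Fin 1 => a (Fin.last e)) (fun _ => r (Fin.last e)) (fun _ => s (Fin.last e)))

/-- Iterated `*`-product of blockwise given elements. -/
def starBlocks {P : GoodPair 𝕜 A β} (D : Tower 𝕜 A β n T P) :
    ∀ (q : ℕ) (sz : Fin q → ℕ), (∀ m, T (sz m)) → T (∑ m, sz m)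
  | 0, sz, _ => cast (congrArg T (Fin.sum_univ_zero sz).symm) (D.X Fin.elim0 Fin.elim0 Fin.elim0)
  | (q + 1), sz, x =>
      cast (congrArg T (Fin.sum_univ_castSucc sz).symm)
        (D.star (starBlocks D q (fun m => sz m.castSucc) (fun m => x m.castSucc))
          (x (Fin.last q)))

/-- Concatenation of a tuple of words of lengths `sz 0, …, sz (q-1)`. -/
def concatB {α : Type} : ∀ {q : ℕ} (sz : Fin q → ℕ), (∀ m, Fin (sz m) → α) → Fin (∑ m, sz m) → α
  | 0, sz, _ => fun k => Fin.elim0 (cast (congrArg Fin (Fin.sum_univ_zero sz)) k)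
  | (q + 1), sz, f => fun k =>
      Fin.append (concatB (fun m => sz m.castSucc) (fun m => f m.castSucc)) (f (Fin.last q))
        (cast (congrArg Fin (Fin.sum_univ_castSucc sz)) k)

/-- A triple of words `(𝐛,𝐫,𝐬)`. -/
abbrev WordTriple (β : Type) (n d : ℕ) : Type :=
  (Fin d → β) × (Fin d → Fin n) × (Fin d → Fin n)

/-- The diagonal right place-permutation action on triples of words. -/
def wAct {d : ℕ} (w : WordTriple β n d) (σ : Equiv.Perm (Fin d)) : WordTriple β n d :=
  (w.1 ∘ σ, w.2.1 ∘ σ, w.2.2 ∘ σ)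

/-- The `k`-th entry triple `(b_k, r_k, s_k)` (with `b_k` realized in `A`). -/
def entryAt (P : GoodPair 𝕜 A β) {n d : ℕ} (w : WordTriple β n d) (k : Fin d) :
    A × Fin n × Fin n :=
  (P.bas (w.1 k), w.2.1 k, w.2.2 k)

/-- The lexicographic order on triples of words induced by the total order `ord`. -/
def wordLE (P : GoodPair 𝕜 A β) {n : ℕ} (ord : LinearOrder (A × Fin n × Fin n)) {d : ℕ}
    (w w' : WordTriple β n d) : Prop :=
  (∀ k, entryAt P w k = entryAt P w' k) ∨
    ∃ l : Fin d, (∀ k, k < l → entryAt P w k = entryAt P w' k) ∧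
      ord.lt (entryAt P w l) (entryAt P w' l)

/-- `Tri^B_0(n,d)`: the lexicographically minimal representatives of the `S_d`-orbits on
`Tri^B(n,d)`. -/
def IsTri0 (P : GoodPair 𝕜 A β) {n : ℕ} (ord : LinearOrder (A × Fin n × Fin n)) {d : ℕ}
    (w : WordTriple β n d) : Prop :=
  IsTriB P w.1 w.2.1 w.2.2 ∧ ∀ σ : Equiv.Perm (Fin d), wordLE P ord w (wAct w σ)

/-- The first `l` letters of each word. -/
def firstW {d : ℕ} (l : ℕ) (hl : l ≤ d) (w : WordTriple β n d) : WordTriple β n l :=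
  (fun k => w.1 ⟨k, lt_of_lt_of_le k.isLt hl⟩,
   fun k => w.2.1 ⟨k, lt_of_lt_of_le k.isLt hl⟩,
   fun k => w.2.2 ⟨k, lt_of_lt_of_le k.isLt hl⟩)

/-- The last `d - l` letters of each word. -/
def lastW {d : ℕ} (l : ℕ) (hl : l ≤ d) (w : WordTriple β n d) : WordTriple β n (d - l) :=
  (fun k => w.1 ⟨l + (k : ℕ), by have := k.isLt; omega⟩,
   fun k => w.2.1 ⟨l + (k : ℕ), by have := k.isLt; omega⟩,
   fun k => w.2.2 ⟨l + (k : ℕ), by have := k.isLt; omega⟩)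

/-- Concatenation of words. -/
def appF {α : Type} {d : ℕ} (l : ℕ) (hl : l ≤ d) (f : Fin l → α) (g : Fin (d - l) → α) :
    Fin d → α :=
  fun k => if hk : (k : ℕ) < l then f ⟨k, hk⟩ else g ⟨(k : ℕ) - l, by have := k.isLt; omega⟩

/-- Concatenation `T¹T²` of two triples of words. -/
def concatW {d : ℕ} (l : ℕ) (hl : l ≤ d) (p : WordTriple β n l × WordTriple β n (d - l)) :
    WordTriple β n d :=
  (appF l hl p.1.1 p.2.1, appF l hl p.1.2.1 p.2.2.1, appF l hl p.1.2.2 p.2.2.2)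

/-- `Spl_l(T)`, the set of `l`-splits of `T ∈ Tri^B_0(n,d)`. -/
def splitsF (P : GoodPair 𝕜 A β) {n : ℕ} (ord : LinearOrder (A × Fin n × Fin n)) {d : ℕ}
    (l : ℕ) (hl : l ≤ d) (w : WordTriple β n d) :
    Finset (WordTriple β n l × WordTriple β n (d - l)) :=
  (univ.image fun σ : Equiv.Perm (Fin d) =>
      (firstW l hl (wAct w σ), lastW l hl (wAct w σ))).filter
    fun p => IsTri0 P ord p.1 ∧ IsTri0 P ord p.2

/-- The number of inversions (= Coxeter length) of a permutation. -/
def invCount {d : ℕ} (σ : Equiv.Perm (Fin d)) : ℕ :=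
  (univ.filter fun kl : Fin d × Fin d => kl.1 < kl.2 ∧ σ kl.2 < σ kl.1).card

/-- The submodule `{x | x·ε = x}` (for an idempotent `ε` this is `R·ε`). -/
def rfix (𝕜 : Type) {R : Type} [CommRing 𝕜] [NonUnitalRing R] [Module 𝕜 R]
    [IsScalarTower 𝕜 R R] (ε : R) : Submodule 𝕜 R where
  carrier := {x | x * ε = x}
  add_mem' := by
    intro x y hx hy
    simp only [Set.mem_setOf_eq] at *
    rw [add_mul, hx, hy]
  zero_mem' := by simp
  smul_mem' := by
    intro c x hx
    simp only [Set.mem_setOf_eq] at *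
    rw [smul_mul_assoc, hx]

/-- Right `εSε`-module endomorphism property for a map of `S·ε = M ⊓ rfix ε`,
where `S` is the (possibly non-unital) algebra realized as the submodule `M` of `R`. -/
def IsEquivar (𝕜 : Type) {R : Type} [CommRing 𝕜] [NonUnitalRing R] [Module 𝕜 R]
    [IsScalarTower 𝕜 R R] (M : Submodule 𝕜 R) (ε : R)
    (f : ↥(M ⊓ rfix 𝕜 ε) →ₗ[𝕜] ↥(M ⊓ rfix 𝕜 ε)) : Prop :=
  ∀ (x : ↥(M ⊓ rfix 𝕜 ε)) (c : R), c ∈ M → ε * c * ε = c →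
    ∀ h : (x : R) * c ∈ M ⊓ rfix 𝕜 ε,
      ((f ⟨(x : R) * c, h⟩ : ↥(M ⊓ rfix 𝕜 ε)) : R) = (f x : R) * c

/-- `ε` is a *double centralizer idempotent* for the algebra `M ⊆ R`: the left
multiplication map `λ : M → End_{εMε}(Mε)` is bijective. -/
def IsDCI (𝕜 : Type) {R : Type} [CommRing 𝕜] [NonUnitalRing R] [Module 𝕜 R]
    [IsScalarTower 𝕜 R R] (M : Submodule 𝕜 R) (ε : R) : Prop :=
  (∀ s ∈ M, ∀ s' ∈ M, (∀ x ∈ M ⊓ rfix 𝕜 ε, s * x = s' * x) → s = s') ∧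
  (∀ f : ↥(M ⊓ rfix 𝕜 ε) →ₗ[𝕜] ↥(M ⊓ rfix 𝕜 ε), IsEquivar 𝕜 M ε f →
    ∃ s ∈ M, ∀ x : ↥(M ⊓ rfix 𝕜 ε), (f x : R) = s * (x : R))

/-!
On words in `Tri^B` the Koszul sign of a permutation is a coboundary: moving `v` to `v·σ` costs
exactly the sign of sorting the odd entries of `v` times that of `v·σ`. Hence, for `T` in
`Tri^B_0`, `ξ_T` is the sum of the pure tensors over the orbit of `T`, each weighted by its sorting
sign. Deconcatenation cuts each word `v` of the orbit into two halves; sorting both halves yields a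
pair `(T¹, T²)` in `Spl_l(T)`, and the words with a given pair are the products of the orbits of
`T¹` and `T²`. Sorting the halves first and then `T¹T²` factors the sorting sign of `v`, and the
sorting sign of `T¹T²` is the Koszul sign of any `σ` with `T·σ = T¹T²`.

The coefficients of an invariant on an orbit are determined by one of them, and they vanish when an
odd entry is repeated: swapping the two equal entries negates the coefficient, and `2` is not a zero
divisor. So the `ξ_T` span the invariants, and the formula for `∇(ξ_T)` gives the inclusion.
-/

/-! ## Discordance of two functions on a finite set -/

section Discordance

variable {ι κ α γ δ : Type*} [LinearOrder α] [LinearOrder γ] [LinearOrder δ]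

/-- The number of pairs in `O` that `f` and `g` order in opposite ways. For `f = id` it is the
number of inversions of `g` on `O`, so it covers both sign counts `⟨σ;𝐚⟩` and `⟨𝐚,𝐫,𝐬⟩`. -/
def discordance (O : Finset ι) (f : ι → α) (g : ι → γ) : ℕ :=
  #{p ∈ O ×ˢ O | f p.1 < f p.2 ∧ g p.2 < g p.1}

lemma discordance_map (O : Finset κ) (e : κ ↪ ι) (f : ι → α) (g : ι → γ) :
    discordance (O.map e) f g = discordance O (f ∘ e) (g ∘ e) := by
  rw [discordance, discordance, ← Finset.prodMap_map_product, Finset.filter_map, Finset.card_map]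
  rfl

lemma discordance_comp_strictMono {α' γ' : Type*} [LinearOrder α'] [LinearOrder γ'] (O : Finset ι)
    {φ : α → α'} {ψ : γ → γ'} (hφ : StrictMono φ) (hψ : StrictMono ψ) (f : ι → α) (g : ι → γ) :
    discordance O (φ ∘ f) (ψ ∘ g) = discordance O f g := by
  simp only [discordance, Function.comp_apply, hφ.lt_iff_lt, hψ.lt_iff_lt]

lemma discordance_disjSum (O : Finset ι) (O' : Finset κ) {f : ι ⊕ κ → α} {g : ι ⊕ κ → γ}
    (hf : ∀ i j, f (.inl i) < f (.inr j)) (hg : ∀ i j, g (.inl i) < g (.inr j)) :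
    discordance (O.disjSum O') f g =
      discordance O (f ∘ .inl) (g ∘ .inl) + discordance O' (f ∘ .inr) (g ∘ .inr) := by
  simp only [discordance, Finset.card_filter, Finset.sum_product, Finset.sum_disjSum,
    (hf _ _).not_gt, (hg _ _).not_gt, and_false, false_and, if_false, Finset.sum_const_zero,
    add_zero, zero_add, Function.comp_apply]

lemma discordance_eq_zero_of_monotone [LinearOrder ι] (O : Finset ι) {g : ι → γ}
    (hg : Monotone g) : discordance O id g = 0 := by
  rw [discordance, Finset.card_eq_zero, Finset.filter_eq_empty_iff]
  exact fun p _ hp => (hg hp.1.le).not_gt hp.2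

lemma discordance_eq_add_of_injOn {O : Finset ι} {k : ι → δ} (hk : Set.InjOn k O) (f : ι → α)
    (g : ι → γ) :
    discordance O f g = #{p ∈ O ×ˢ O | k p.1 < k p.2 ∧ f p.1 < f p.2 ∧ g p.2 < g p.1} +
      #{p ∈ O ×ˢ O | k p.1 < k p.2 ∧ f p.2 < f p.1 ∧ g p.1 < g p.2} := by
  have hswap : #{p ∈ O ×ˢ O | k p.1 < k p.2 ∧ f p.2 < f p.1 ∧ g p.1 < g p.2} =
      #{p ∈ O ×ˢ O | k p.2 < k p.1 ∧ f p.1 < f p.2 ∧ g p.2 < g p.1} :=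
    Finset.card_bij' (fun p _ => p.swap) (fun p _ => p.swap) (by grind) (by grind)
      (by simp) (by simp)
  rw [hswap, discordance, ← Finset.card_union_of_disjoint]
  · congr 1
    ext ⟨i, j⟩
    simp only [Finset.mem_filter, Finset.mem_product, Finset.mem_union]
    have hne (hi : i ∈ O) (hj : j ∈ O) (hf : f i < f j) : k i ≠ k j :=
      fun h => hf.ne (congrArg f (hk hi hj h))
    grind
  · exact Finset.disjoint_filter.mpr fun p _ h h' => h.1.asymm h'.1

lemma discordance_add_discordance {O : Finset ι} {f : ι → α} {g : ι → γ} {h : ι → δ}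
    (hf : Set.InjOn f O) (hg : Set.InjOn g O) (hh : Set.InjOn h O) :
    discordance O f g + discordance O g h =
      discordance O f h + 2 * #{p ∈ O ×ˢ O | f p.1 < f p.2 ∧ g p.2 < g p.1 ∧ h p.1 < h p.2} := by
  rw [discordance_eq_add_of_injOn hf g h, discordance, discordance]
  simp only [Finset.card_filter, Finset.mul_sum, ← Finset.sum_add_distrib]
  refine Finset.sum_congr rfl fun p hp => ?_
  obtain ⟨h₁, h₂⟩ := Finset.mem_product.mp hp
  by_cases hlt : f p.1 < f p.2
  · have hne : p.1 ≠ p.2 := fun h => hlt.ne (congrArg f h)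
    rcases lt_or_gt_of_ne (hg.ne h₁ h₂ hne) with hg' | hg' <;>
      rcases lt_or_gt_of_ne (hh.ne h₁ h₂ hne) with hh' | hh' <;>
      simp [hlt, hg', hh', hg'.not_gt, hh'.not_gt]
  · simp [hlt]

lemma neg_one_pow_discordance_trans {O : Finset ι} {f : ι → α} {g : ι → γ} {h : ι → δ}
    (hf : Set.InjOn f O) (hg : Set.InjOn g O) (hh : Set.InjOn h O) :
    (-1 : ℤ) ^ discordance O f h = (-1) ^ discordance O f g * (-1) ^ discordance O g h := by
  rw [← pow_add, discordance_add_discordance hf hg hh, pow_add, pow_mul, neg_one_sq, one_pow,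
    mul_one]

lemma discordance_swap [LinearOrder ι] {O : Finset ι} {i j : ι} (hi : i ∈ O) (hj : j ∈ O)
    (hij : i < j) :
    discordance O id (Equiv.swap i j) = 2 * #{k ∈ O | i < k ∧ k < j} + 1 := by
  let B := {k ∈ O | i < k ∧ k < j}
  have hset : {p ∈ O ×ˢ O | id p.1 < id p.2 ∧ Equiv.swap i j p.2 < Equiv.swap i j p.1} =
      insert (i, j) (B.image (Prod.mk i) ∪ B.image (·, j)) := by
    ext ⟨a, b⟩
    simp only [B, mem_filter, mem_insert, mem_union, mem_image, Prod.mk.injEq, id,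
      Equiv.swap_apply_def]
    grind
  have hdisj : Disjoint (B.image (Prod.mk i)) (B.image (·, j)) := by
    rw [Finset.disjoint_left]
    grind
  have hnot : (i, j) ∉ B.image (Prod.mk i) ∪ B.image (·, j) := by grind
  rw [discordance, hset, Finset.card_insert_of_notMem hnot, Finset.card_union_of_disjoint hdisj,
    Finset.card_image_of_injective _ (Prod.mk_right_injective i),
    Finset.card_image_of_injective _ (Prod.mk_left_injective j), two_mul]

lemma neg_one_pow_discordance_swap [LinearOrder ι] {O : Finset ι} {i j : ι} (hi : i ∈ O)
    (hj : j ∈ O) (hij : i ≠ j) : (-1 : ℤ) ^ discordance O id (Equiv.swap i j) = -1 := by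
  wlog h : i < j generalizing i j
  · rw [Equiv.swap_comm]
    exact this hj hi hij.symm (lt_of_le_of_ne (not_lt.mp h) hij.symm)
  rw [discordance_swap hi hj h, pow_succ, pow_mul, neg_one_sq, one_pow, one_mul]

end Discordance

/-! ## Sorted words -/

lemma monotone_iff_forall_toLex_le_comp_perm {α : Type*} [LinearOrder α] {d : ℕ} {f : Fin d → α} :
    Monotone f ↔ ∀ σ : Equiv.Perm (Fin d), toLex f ≤ toLex (f ∘ σ) := by
  have monotone_of_min {σ : Equiv.Perm (Fin d)}
      (hσ : ∀ τ : Equiv.Perm (Fin d), toLex (f ∘ σ) ≤ toLex (f ∘ τ)) : Monotone (f ∘ σ) := by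
    intro i j hij
    by_contra! hlt
    exact (Pi.lex_desc hij hlt).not_ge (hσ (σ * Equiv.swap i j))
  refine ⟨fun hf σ => ?_, fun h => monotone_of_min (σ := 1) h⟩
  obtain ⟨τ, hτ⟩ := Finite.exists_min fun τ : Equiv.Perm (Fin d) => toLex (f ∘ τ)
  have hfτ : f = f ∘ τ := Tuple.unique_monotone (σ := 1) hf (monotone_of_min hτ)
  exact (congrArg toLex hfτ).trans_le (hτ σ)

section Words

variable {d : ℕ}

lemma wAct_one (w : WordTriple β n d) : wAct w 1 = w := rfl

lemma wAct_wAct (w : WordTriple β n d) (σ τ : Equiv.Perm (Fin d)) :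
    wAct (wAct w σ) τ = wAct w (σ * τ) := rfl

lemma wAct_injective (σ : Equiv.Perm (Fin d)) :
    Function.Injective fun w : WordTriple β n d => wAct w σ :=
  Function.LeftInverse.injective (g := (wAct · σ⁻¹)) fun w => by
    simp only [wAct_wAct, mul_inv_cancel, wAct_one]

/-- The `S_d`-orbit of a triple of words. -/
def wordOrbit (w : WordTriple β n d) : Finset (WordTriple β n d) :=
  univ.image (wAct w)

lemma mem_wordOrbit {v w : WordTriple β n d} :
    v ∈ wordOrbit w ↔ ∃ σ : Equiv.Perm (Fin d), wAct w σ = v := by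
  simp [wordOrbit]

lemma self_mem_wordOrbit (w : WordTriple β n d) : w ∈ wordOrbit w :=
  mem_wordOrbit.mpr ⟨1, wAct_one w⟩

lemma wAct_mem_wordOrbit_iff {v w : WordTriple β n d} (σ : Equiv.Perm (Fin d)) :
    wAct v σ ∈ wordOrbit w ↔ v ∈ wordOrbit w := by
  have wAct_mem {v : WordTriple β n d} (τ : Equiv.Perm (Fin d)) (h : v ∈ wordOrbit w) :
      wAct v τ ∈ wordOrbit w := by
    obtain ⟨ρ, rfl⟩ := mem_wordOrbit.mp h
    exact mem_wordOrbit.mpr ⟨ρ * τ, rfl⟩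
  refine ⟨fun h => ?_, wAct_mem σ⟩
  simpa only [wAct_wAct, mul_inv_cancel, wAct_one] using wAct_mem σ⁻¹ h

lemma IsTriB.wAct {P : GoodPair 𝕜 A β} {w : WordTriple β n d} (hw : IsTriB P w.1 w.2.1 w.2.2)
    (σ : Equiv.Perm (Fin d)) : IsTriB P (wAct w σ).1 (wAct w σ).2.1 (wAct w σ).2.2 :=
  fun k l hkl => hw (σ k) (σ l) (σ.injective.ne hkl)

lemma entryAt_wAct (P : GoodPair 𝕜 A β) (w : WordTriple β n d) (σ : Equiv.Perm (Fin d)) :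
    entryAt P (wAct w σ) = entryAt P w ∘ σ := rfl

lemma entryAt_injective [Nontrivial 𝕜] (P : GoodPair 𝕜 A β) :
    Function.Injective (entryAt P : WordTriple β n d → Fin d → A × Fin n × Fin n) := by
  intro v w h
  simp only [funext_iff, entryAt, Prod.mk.injEq, P.bas.injective.eq_iff] at h
  exact Prod.ext (funext fun k => (h k).1)
    (Prod.ext (funext fun k => (h k).2.1) (funext fun k => (h k).2.2))

variable [ord : LinearOrder (A × Fin n × Fin n)]

lemma wordLE_iff_toLex_le (P : GoodPair 𝕜 A β) (v w : WordTriple β n d) :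
    wordLE P ord v w ↔ toLex (entryAt P v) ≤ toLex (entryAt P w) := by
  rw [le_iff_eq_or_lt, toLex_inj, funext_iff]
  rfl

lemma isTri0_iff {P : GoodPair 𝕜 A β} {w : WordTriple β n d} :
    IsTri0 P ord w ↔ IsTriB P w.1 w.2.1 w.2.2 ∧ Monotone (entryAt P w) := by
  simp only [IsTri0, wordLE_iff_toLex_le, entryAt_wAct, monotone_iff_forall_toLex_le_comp_perm]

/-- The rearrangement of a triple of words whose entries increase; for words in `Tri^B` it is the
representative in `Tri^B_0` of the orbit. -/
def sortWord (P : GoodPair 𝕜 A β) (w : WordTriple β n d) : WordTriple β n d :=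
  wAct w (Tuple.sort (entryAt P w))

lemma monotone_entryAt_sortWord (P : GoodPair 𝕜 A β) (w : WordTriple β n d) :
    Monotone (entryAt P (sortWord P w)) :=
  Tuple.monotone_sort (entryAt P w)

lemma sortWord_of_monotone {P : GoodPair 𝕜 A β} {w : WordTriple β n d}
    (hw : Monotone (entryAt P w)) : sortWord P w = w := by
  rw [sortWord, Tuple.sort_eq_refl_iff_monotone.mpr hw]
  rfl

lemma sortWord_wAct [Nontrivial 𝕜] (P : GoodPair 𝕜 A β) (w : WordTriple β n d)
    (σ : Equiv.Perm (Fin d)) : sortWord P (wAct w σ) = sortWord P w :=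
  entryAt_injective P (Tuple.comp_perm_comp_sort_eq_comp_sort (f := entryAt P w))

lemma mem_wordOrbit_iff_sortWord_eq [Nontrivial 𝕜] {P : GoodPair 𝕜 A β} {v w : WordTriple β n d}
    (hw : Monotone (entryAt P w)) : v ∈ wordOrbit w ↔ sortWord P v = w := by
  refine ⟨fun hv => ?_, ?_⟩
  · obtain ⟨σ, rfl⟩ := mem_wordOrbit.mp hv
    rw [sortWord_wAct, sortWord_of_monotone hw]
  · rintro rfl
    exact (wAct_mem_wordOrbit_iff _).mp (self_mem_wordOrbit (sortWord P v))

end Words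

/-! ## Signs of words -/

section Signs

variable {d : ℕ}

/-- The places of a triple of words that carry an odd basis element. -/
def oddPlaces (P : GoodPair 𝕜 A β) (w : WordTriple β n d) : Finset (Fin d) :=
  {k | P.bas (w.1 k) ∈ P.od}

lemma mem_oddPlaces {P : GoodPair 𝕜 A β} {w : WordTriple β n d} {k : Fin d} :
    k ∈ oddPlaces P w ↔ P.bas (w.1 k) ∈ P.od := by
  simp [oddPlaces]

lemma map_oddPlaces_wAct (P : GoodPair 𝕜 A β) (w : WordTriple β n d) (σ : Equiv.Perm (Fin d)) :
    (oddPlaces P (wAct w σ)).map σ.toEmbedding = oddPlaces P w := by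
  ext k
  rw [Finset.mem_map_equiv, mem_oddPlaces, mem_oddPlaces]
  simp [wAct]

lemma bas_mem_ev (P : GoodPair 𝕜 A β) {i : β} (hi : P.part i ≠ 2) : P.bas i ∈ P.ev := by
  have hcc : P.cc ≤ P.ev := le_sup_right.trans_eq P.aa_sup_cc
  have hpart : P.part i = 0 ∨ P.part i = 1 := by omega
  exact hpart.elim (fun h => P.aa_le_ev (P.bas_mem_aa i h)) fun h => hcc (P.bas_mem_cc i h)

lemma homog_bas (P : GoodPair 𝕜 A β) (i : β) : Homog P (P.bas i) :=
  (em (P.part i = 2)).elim (fun h => .inr (P.bas_mem_od i h)) fun h => .inl (bas_mem_ev P h)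

lemma bas_mem_od_iff [Nontrivial 𝕜] (P : GoodPair 𝕜 A β) (i : β) :
    P.bas i ∈ P.od ↔ P.part i = 2 := by
  refine ⟨fun hod => by_contra fun hpart => P.bas.ne_zero i ?_, P.bas_mem_od i⟩
  exact Submodule.disjoint_def.mp P.compl.disjoint _ (bas_mem_ev P hpart) hod

lemma isTriB_iff_injOn_entryAt [Nontrivial 𝕜] {P : GoodPair 𝕜 A β} {w : WordTriple β n d} :
    IsTriB P w.1 w.2.1 w.2.2 ↔ Set.InjOn (entryAt P w) (oddPlaces P w) := by
  have hentry (k l : Fin d) : ((w.1 k, w.2.1 k, w.2.2 k) : β × Fin n × Fin n) =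
      (w.1 l, w.2.1 l, w.2.2 l) ↔ entryAt P w k = entryAt P w l := by
    simp only [entryAt, Prod.mk.injEq, P.bas.injective.eq_iff]
  have bas_eq {k l : Fin d} (h : entryAt P w k = entryAt P w l) : w.1 k = w.1 l :=
    P.bas.injective (congrArg Prod.fst h)
  simp only [IsTriB, hentry, Set.InjOn, Finset.mem_coe, mem_oddPlaces, bas_mem_od_iff]
  exact ⟨fun h k hk l _ hkl => by_contra fun hne => h k l hne hkl hk,
    fun h k l hne hkl hk => hne (h hk (bas_eq hkl ▸ hk) hkl)⟩

/-- The Koszul sign `(-1)^⟨σ;𝐛⟩` of the action of `σ` on a word `𝐛` of basis elements. -/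
def koszulSign (P : GoodPair 𝕜 A β) (σ : Equiv.Perm (Fin d)) (w : WordTriple β n d) : ℤ :=
  (-1) ^ sgnc P.od σ fun k => P.bas (w.1 k)

lemma koszulSign_eq_discordance (P : GoodPair 𝕜 A β) (σ : Equiv.Perm (Fin d))
    (w : WordTriple β n d) :
    koszulSign P σ w = (-1) ^ discordance (oddPlaces P w) id ⇑σ⁻¹ := by
  rw [koszulSign, sgnc, discordance]
  congr 2
  ext kl
  simp [mem_oddPlaces, and_left_comm, and_assoc, and_comm]

lemma koszulSign_swap {P : GoodPair 𝕜 A β} {w : WordTriple β n d} {k l : Fin d}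
    (hk : k ∈ oddPlaces P w) (hl : l ∈ oddPlaces P w) (hkl : k ≠ l) :
    koszulSign P (Equiv.swap k l) w = -1 := by
  rw [koszulSign_eq_discordance, Equiv.swap_inv, neg_one_pow_discordance_swap hk hl hkl]

variable [ord : LinearOrder (A × Fin n × Fin n)]

/-- The sign `(-1)^⟨𝐛,𝐫,𝐬⟩` of the permutation that sorts the odd entries of a word. -/
def sortSign (P : GoodPair 𝕜 A β) (w : WordTriple β n d) : ℤ :=
  (-1) ^ ang P.od ord (fun k => P.bas (w.1 k)) w.2.1 w.2.2

lemma sortSign_eq_discordance (P : GoodPair 𝕜 A β) (w : WordTriple β n d) :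
    sortSign P w = (-1) ^ discordance (oddPlaces P w) id (entryAt P w) := by
  rw [sortSign, ang, discordance]
  congr 2
  ext kl
  rw [Finset.mem_filter, Finset.mem_filter, Finset.mem_product, mem_oddPlaces, mem_oddPlaces]
  simp only [entryAt, id, Finset.mem_univ, true_and]
  tauto

lemma sortSign_mul_self (P : GoodPair 𝕜 A β) (w : WordTriple β n d) :
    sortSign P w * sortSign P w = 1 := by
  rw [sortSign, ← mul_pow, neg_one_mul, neg_neg, one_pow]

lemma sortSign_of_monotone {P : GoodPair 𝕜 A β} {w : WordTriple β n d}
    (hw : Monotone (entryAt P w)) : sortSign P w = 1 := by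
  rw [sortSign_eq_discordance, discordance_eq_zero_of_monotone _ hw, pow_zero]

lemma koszulSign_eq_sortSign_mul_sortSign [Nontrivial 𝕜] {P : GoodPair 𝕜 A β}
    {w : WordTriple β n d} (hw : IsTriB P w.1 w.2.1 w.2.2) (σ : Equiv.Perm (Fin d)) :
    koszulSign P σ w = sortSign P w * sortSign P (wAct w σ) := by
  have hsort : sortSign P (wAct w σ) =
      (-1) ^ discordance (oddPlaces P w) ⇑σ⁻¹ (entryAt P w) := by
    rw [sortSign_eq_discordance, ← map_oddPlaces_wAct P w σ, discordance_map, entryAt_wAct]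
    congr 2
    ext k
    simp
  have htrans : sortSign P w = koszulSign P σ w * sortSign P (wAct w σ) := by
    rw [hsort, sortSign_eq_discordance, koszulSign_eq_discordance]
    exact neg_one_pow_discordance_trans Function.injective_id.injOn (σ⁻¹).injective.injOn
      (isTriB_iff_injOn_entryAt.mp hw)
  rw [htrans, mul_assoc, sortSign_mul_self, mul_one]

end Signs

/-! ## Splitting words -/

section Splitting

variable {d l : ℕ}

/-- The decomposition of `d` places into the first `l` and the last `d - l`. -/
def splitEquiv (hl : l ≤ d) : Fin l ⊕ Fin (d - l) ≃ Fin d :=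
  finSumFinEquiv.trans (finCongr (Nat.add_sub_of_le hl))

lemma splitEquiv_inl_lt_inr (hl : l ≤ d) (i : Fin l) (j : Fin (d - l)) :
    splitEquiv hl (.inl i) < splitEquiv hl (.inr j) :=
  i.isLt.trans_le (Nat.le_add_right l j)

/-- The image of `(σ, τ)` in `S_d` under the embedding of the Young subgroup `S_l × S_{d-l}`. -/
def blockPerm (hl : l ≤ d) (σ : Equiv.Perm (Fin l)) (τ : Equiv.Perm (Fin (d - l))) :
    Equiv.Perm (Fin d) :=
  (splitEquiv hl).permCongr (Equiv.Perm.sumCongr σ τ)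

lemma blockPerm_splitEquiv (hl : l ≤ d) (σ : Equiv.Perm (Fin l)) (τ : Equiv.Perm (Fin (d - l)))
    (k : Fin l ⊕ Fin (d - l)) :
    blockPerm hl σ τ (splitEquiv hl k) = splitEquiv hl (Sum.map σ τ k) := by
  simp [blockPerm]

lemma firstW_wAct_blockPerm (hl : l ≤ d) (w : WordTriple β n d) (σ : Equiv.Perm (Fin l))
    (τ : Equiv.Perm (Fin (d - l))) :
    firstW l hl (wAct w (blockPerm hl σ τ)) = wAct (firstW l hl w) σ := by
  have h (k : Fin l) : blockPerm hl σ τ (splitEquiv hl (.inl k)) = splitEquiv hl (.inl (σ k)) :=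
    blockPerm_splitEquiv hl σ τ (.inl k)
  exact Prod.ext (funext fun k => congrArg w.1 (h k)) (Prod.ext
    (funext fun k => congrArg w.2.1 (h k)) (funext fun k => congrArg w.2.2 (h k)))

lemma lastW_wAct_blockPerm (hl : l ≤ d) (w : WordTriple β n d) (σ : Equiv.Perm (Fin l))
    (τ : Equiv.Perm (Fin (d - l))) :
    lastW l hl (wAct w (blockPerm hl σ τ)) = wAct (lastW l hl w) τ := by
  have h (k : Fin (d - l)) :
      blockPerm hl σ τ (splitEquiv hl (.inr k)) = splitEquiv hl (.inr (τ k)) :=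
    blockPerm_splitEquiv hl σ τ (.inr k)
  exact Prod.ext (funext fun k => congrArg w.1 (h k)) (Prod.ext
    (funext fun k => congrArg w.2.1 (h k)) (funext fun k => congrArg w.2.2 (h k)))

lemma appF_comp_splitEquiv {α : Type} (hl : l ≤ d) (f : Fin l → α) (g : Fin (d - l) → α) :
    appF l hl f g ∘ splitEquiv hl = Sum.elim f g := by
  ext (k | k) <;> simp [appF, splitEquiv]

lemma appF_eq_iff {α : Type} (hl : l ≤ d) {f : Fin l → α} {g : Fin (d - l) → α} {h : Fin d → α} :
    appF l hl f g = h ↔ h ∘ splitEquiv hl ∘ .inl = f ∧ h ∘ splitEquiv hl ∘ .inr = g := by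
  rw [← (splitEquiv hl).surjective.injective_comp_right.eq_iff, appF_comp_splitEquiv]
  simp only [funext_iff, Sum.forall, Sum.elim_inl, Sum.elim_inr, Function.comp_apply, eq_comm]

lemma concatW_eq_iff (hl : l ≤ d) {p : WordTriple β n l × WordTriple β n (d - l)}
    {w : WordTriple β n d} : concatW l hl p = w ↔ (firstW l hl w, lastW l hl w) = p := by
  simp only [concatW, Prod.ext_iff, appF_eq_iff]
  exact ⟨fun ⟨hb, hr, hs⟩ => ⟨⟨hb.1, hr.1, hs.1⟩, hb.2, hr.2, hs.2⟩,
    fun ⟨⟨hb, hr, hs⟩, hb', hr', hs'⟩ => ⟨⟨hb, hb'⟩, ⟨hr, hr'⟩, hs, hs'⟩⟩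

lemma concatW_firstW_lastW (hl : l ≤ d) (w : WordTriple β n d) :
    concatW l hl (firstW l hl w, lastW l hl w) = w :=
  (concatW_eq_iff hl).mpr rfl

lemma isTriB_firstW (hl : l ≤ d) {P : GoodPair 𝕜 A β} {w : WordTriple β n d}
    (hw : IsTriB P w.1 w.2.1 w.2.2) :
    IsTriB P (firstW l hl w).1 (firstW l hl w).2.1 (firstW l hl w).2.2 :=
  fun _ _ hkm => hw _ _ ((splitEquiv hl).injective.ne (Sum.inl_injective.ne hkm))

lemma isTriB_lastW (hl : l ≤ d) {P : GoodPair 𝕜 A β} {w : WordTriple β n d}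
    (hw : IsTriB P w.1 w.2.1 w.2.2) :
    IsTriB P (lastW l hl w).1 (lastW l hl w).2.1 (lastW l hl w).2.2 :=
  fun _ _ hkm => hw _ _ ((splitEquiv hl).injective.ne (Sum.inr_injective.ne hkm))

lemma oddPlaces_eq_map_disjSum (hl : l ≤ d) (P : GoodPair 𝕜 A β) (w : WordTriple β n d) :
    oddPlaces P w = ((oddPlaces P (firstW l hl w)).disjSum (oddPlaces P (lastW l hl w))).map
      (splitEquiv hl).toEmbedding := by
  ext k
  obtain ⟨k, rfl⟩ := (splitEquiv hl).surjective k
  rw [Finset.mem_map_equiv, Equiv.symm_apply_apply]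
  rcases k with k | k
  · rw [Finset.inl_mem_disjSum, mem_oddPlaces, mem_oddPlaces]
    rfl
  · rw [Finset.inr_mem_disjSum, mem_oddPlaces, mem_oddPlaces]
    rfl

lemma koszulSign_blockPerm (hl : l ≤ d) (P : GoodPair 𝕜 A β) (w : WordTriple β n d)
    (σ : Equiv.Perm (Fin l)) (τ : Equiv.Perm (Fin (d - l))) :
    koszulSign P (blockPerm hl σ τ) w =
      koszulSign P σ (firstW l hl w) * koszulSign P τ (lastW l hl w) := by
  have hinl : StrictMono (splitEquiv hl ∘ .inl) := fun i j hij => hij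
  have hinr : StrictMono (splitEquiv hl ∘ .inr) := fun i j hij => Nat.add_lt_add_left hij l
  have hblock : ⇑(blockPerm hl σ τ)⁻¹ ∘ splitEquiv hl = splitEquiv hl ∘ Sum.map ⇑σ⁻¹ ⇑τ⁻¹ :=
    funext fun k => blockPerm_splitEquiv hl σ⁻¹ τ⁻¹ k
  simp only [koszulSign_eq_discordance, oddPlaces_eq_map_disjSum hl P w, discordance_map,
    Equiv.coe_toEmbedding, Function.id_comp, hblock]
  rw [discordance_disjSum _ _ (g := splitEquiv hl ∘ Sum.map ⇑σ⁻¹ ⇑τ⁻¹) (splitEquiv_inl_lt_inr hl)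
    fun i j => splitEquiv_inl_lt_inr hl _ _, pow_add]
  exact congrArg₂ (fun a b => (-1) ^ a * (-1) ^ b)
    (discordance_comp_strictMono _ hinl hinl id ⇑σ⁻¹)
    (discordance_comp_strictMono _ hinr hinr id ⇑τ⁻¹)

variable [ord : LinearOrder (A × Fin n × Fin n)]

lemma mem_splitsF {P : GoodPair 𝕜 A β} (hl : l ≤ d) {w : WordTriple β n d}
    {p : WordTriple β n l × WordTriple β n (d - l)} :
    p ∈ splitsF P ord l hl w ↔
      concatW l hl p ∈ wordOrbit w ∧ IsTri0 P ord p.1 ∧ IsTri0 P ord p.2 := by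
  rw [splitsF, Finset.mem_filter, Finset.mem_image, mem_wordOrbit]
  simp only [Finset.mem_univ, true_and, eq_comm (b := concatW l hl p), concatW_eq_iff]

/-- The pair of sorted halves of a word. -/
def sortSplit (P : GoodPair 𝕜 A β) (hl : l ≤ d) (v : WordTriple β n d) :
    WordTriple β n l × WordTriple β n (d - l) :=
  (sortWord P (firstW l hl v), sortWord P (lastW l hl v))

lemma concatW_sortSplit (P : GoodPair 𝕜 A β) (hl : l ≤ d) (v : WordTriple β n d) :
    concatW l hl (sortSplit P hl v) = wAct v (blockPerm hl (Tuple.sort (entryAt P (firstW l hl v)))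
      (Tuple.sort (entryAt P (lastW l hl v)))) :=
  (concatW_eq_iff hl).mpr
    (Prod.ext (firstW_wAct_blockPerm hl v _ _) (lastW_wAct_blockPerm hl v _ _))

lemma sortSplit_mem_splitsF {P : GoodPair 𝕜 A β} (hl : l ≤ d) {v w : WordTriple β n d}
    (hw : IsTriB P w.1 w.2.1 w.2.2) (hv : v ∈ wordOrbit w) :
    sortSplit P hl v ∈ splitsF P ord l hl w := by
  obtain ⟨σ, rfl⟩ := mem_wordOrbit.mp hv
  rw [mem_splitsF, concatW_sortSplit, wAct_wAct, isTri0_iff, isTri0_iff]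
  exact ⟨mem_wordOrbit.mpr ⟨_, rfl⟩,
    ⟨(isTriB_firstW hl (hw.wAct σ)).wAct _, monotone_entryAt_sortWord P _⟩,
    (isTriB_lastW hl (hw.wAct σ)).wAct _, monotone_entryAt_sortWord P _⟩

lemma mem_wordOrbit_and_sortSplit_eq_iff [Nontrivial 𝕜] {P : GoodPair 𝕜 A β} (hl : l ≤ d)
    {v w : WordTriple β n d} {p : WordTriple β n l × WordTriple β n (d - l)}
    (hp : p ∈ splitsF P ord l hl w) :
    v ∈ wordOrbit w ∧ sortSplit P hl v = p ↔
      firstW l hl v ∈ wordOrbit p.1 ∧ lastW l hl v ∈ wordOrbit p.2 := by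
  obtain ⟨hpw, hp₁, hp₂⟩ := (mem_splitsF hl).mp hp
  rw [mem_wordOrbit_iff_sortWord_eq (isTri0_iff.mp hp₁).2,
    mem_wordOrbit_iff_sortWord_eq (isTri0_iff.mp hp₂).2, ← Prod.mk_inj]
  refine and_iff_right_of_imp ?_
  rintro rfl
  rwa [concatW_sortSplit, wAct_mem_wordOrbit_iff] at hpw

lemma sortSign_eq_mul_firstW_lastW [Nontrivial 𝕜] {P : GoodPair 𝕜 A β} (hl : l ≤ d)
    {v : WordTriple β n d} (hv : IsTriB P v.1 v.2.1 v.2.2) :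
    sortSign P v = sortSign P (concatW l hl (sortSplit P hl v)) *
      (sortSign P (firstW l hl v) * sortSign P (lastW l hl v)) := by
  have koszulSign_sort {e : ℕ} {u : WordTriple β n e} (hu : IsTriB P u.1 u.2.1 u.2.2) :
      koszulSign P (Tuple.sort (entryAt P u)) u = sortSign P u := by
    rw [koszulSign_eq_sortSign_mul_sortSign hu,
      sortSign_of_monotone (w := wAct u _) (monotone_entryAt_sortWord P u), mul_one]
  rw [← koszulSign_sort (isTriB_firstW hl hv), ← koszulSign_sort (isTriB_lastW hl hv),
    ← koszulSign_blockPerm, koszulSign_eq_sortSign_mul_sortSign hv, ← concatW_sortSplit,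
    mul_left_comm, sortSign_mul_self, mul_one]

end Splitting

/-! ## The invariants and the coproduct -/

section Coproduct

variable {P : GoodPair 𝕜 A β} (D : Tower 𝕜 A β n T P) {d l : ℕ}

/-- The pure tensor `ξ^{b_1}_{r_1,s_1} ⊗ ⋯ ⊗ ξ^{b_d}_{r_d,s_d}` of a triple of words. -/
def pureTensor (w : WordTriple β n d) : T d :=
  D.X (fun k => P.bas (w.1 k)) w.2.1 w.2.2

lemma bas_eq_pureTensor (w : WordTriple β n d) : D.bas d w = pureTensor D w :=
  D.bas_eq d w.1 w.2.1 w.2.2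

lemma act_pureTensor (σ : Equiv.Perm (Fin d)) (w : WordTriple β n d) :
    D.act σ (pureTensor D w) = koszulSign P σ w • pureTensor D (wAct w σ) :=
  D.act_X σ _ _ _ fun k => homog_bas P (w.1 k)

lemma repr_act (x : T d) (σ : Equiv.Perm (Fin d)) (w : WordTriple β n d) :
    (D.bas d).repr (D.act σ x) (wAct w σ) = koszulSign P σ w • (D.bas d).repr x w := by
  have h : Finsupp.lapply (wAct w σ) ∘ₗ (D.bas d).repr.toLinearMap ∘ₗ D.act σ =
      koszulSign P σ w • (Finsupp.lapply w ∘ₗ (D.bas d).repr.toLinearMap) := by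
    refine (D.bas d).ext fun v => ?_
    simp only [LinearMap.comp_apply, LinearMap.smul_apply, LinearEquiv.coe_coe,
      Finsupp.lapply_apply]
    rw [bas_eq_pureTensor, act_pureTensor, map_zsmul, ← bas_eq_pureTensor, ← bas_eq_pureTensor,
      Module.Basis.repr_self, Module.Basis.repr_self, Finsupp.smul_apply]
    rcases eq_or_ne v w with rfl | hvw
    · simp only [Finsupp.single_eq_same]
    · rw [Finsupp.single_eq_of_ne ((wAct_injective σ).ne hvw.symm),
        Finsupp.single_eq_of_ne hvw.symm, smul_zero, smul_zero]
  exact LinearMap.congr_fun h x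

lemma repr_wAct_of_mem_SchurS {x : T d} (hx : x ∈ SchurS D d) (σ : Equiv.Perm (Fin d))
    (w : WordTriple β n d) :
    (D.bas d).repr x (wAct w σ) = koszulSign P σ w • (D.bas d).repr x w := by
  rw [← repr_act, hx σ]

lemma repr_eq_zero_of_not_isTriB [Nontrivial 𝕜] (h2 : (2 : 𝕜) ∈ nonZeroDivisors 𝕜) {x : T d}
    (hx : x ∈ SchurS D d) {w : WordTriple β n d} (hw : ¬ IsTriB P w.1 w.2.1 w.2.2) :
    (D.bas d).repr x w = 0 := by
  simp only [isTriB_iff_injOn_entryAt, Set.InjOn, not_forall] at hw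
  obtain ⟨k, hk, m, hm, hkm, hne⟩ := hw
  have hfix : wAct w (Equiv.swap k m) = w :=
    entryAt_injective P (funext (Equiv.apply_swap_eq_self hkm))
  have hneg := repr_wAct_of_mem_SchurS D hx (Equiv.swap k m) w
  rw [hfix, koszulSign_swap hk hm hne, neg_one_smul, eq_neg_iff_add_eq_zero, ← mul_two] at hneg
  exact (mul_right_mem_nonZeroDivisors_eq_zero_iff h2).mp hneg

lemma nab_tcast_X {m : ℕ} (h : d = l + m) (a : Fin d → A) (r s : Fin d → Fin n) :
    D.nab l m (tcast (𝕜 := 𝕜) h (D.X a r s)) =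
      D.X (fun k : Fin l => a ⟨k, by omega⟩) (fun k => r ⟨k, by omega⟩)
          (fun k => s ⟨k, by omega⟩) ⊗ₜ[𝕜]
        D.X (fun k : Fin m => a ⟨l + k, by omega⟩) (fun k => r ⟨l + k, by omega⟩)
          (fun k => s ⟨l + k, by omega⟩) := by
  subst h
  exact D.nab_X l m a r s

/-- The `(l, d - l)` component of the deconcatenation coproduct `∇` on `M_n(A)^{⊗d}`. -/
def nabla (hl : l ≤ d) : T d →ₗ[𝕜] T l ⊗[𝕜] T (d - l) :=
  D.nab l (d - l) ∘ₗ (tcast (Nat.add_sub_of_le hl).symm).toLinearMap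

lemma nabla_pureTensor (hl : l ≤ d) (w : WordTriple β n d) :
    nabla D hl (pureTensor D w) =
      pureTensor D (firstW l hl w) ⊗ₜ pureTensor D (lastW l hl w) :=
  nab_tcast_X D (Nat.add_sub_of_le hl).symm _ _ _

variable [ord : LinearOrder (A × Fin n × Fin n)]

/-- `ξ_w = ξ^𝐛_{𝐫,𝐬}` for a triple of words `w = (𝐛,𝐫,𝐬)`. -/
abbrev xiWord (w : WordTriple β n d) : T d :=
  xiB D ord w.1 w.2.1 w.2.2

lemma xiWord_eq_sum_wordOrbit [Nontrivial 𝕜] (w : WordTriple β n d) :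
    xiWord D w = ∑ v ∈ wordOrbit w, (sortSign P w * sortSign P v) • pureTensor D v := by
  let real (v : WordTriple β n d) : (Fin d → A) × (Fin d → Fin n) × (Fin d → Fin n) :=
    (P.bas ∘ v.1, v.2)
  have hreal : Function.Injective real :=
    P.bas.injective.comp_left.prodMap Function.injective_id
  have horbit : univ.image (fun σ : Equiv.Perm (Fin d) =>
      ((fun k => P.bas (w.1 k)) ∘ σ, w.2.1 ∘ σ, w.2.2 ∘ σ)) = (wordOrbit w).image real := by
    rw [wordOrbit, Finset.image_image]
    rfl
  rw [xiWord, xiB, xiH, horbit, Finset.sum_image hreal.injOn]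
  simp only [pow_add]
  rfl

lemma xiWord_of_monotone [Nontrivial 𝕜] {w : WordTriple β n d} (hw : Monotone (entryAt P w)) :
    xiWord D w = ∑ v ∈ wordOrbit w, sortSign P v • pureTensor D v := by
  simp only [xiWord_eq_sum_wordOrbit, sortSign_of_monotone hw, one_mul]

lemma xiWord_mem_SchurS [Nontrivial 𝕜] {w : WordTriple β n d} (hw : IsTriB P w.1 w.2.1 w.2.2) :
    xiWord D w ∈ SchurS D d := by
  intro σ
  rw [xiWord_eq_sum_wordOrbit, map_sum]
  refine Finset.sum_nbij' (wAct · σ) (wAct · σ⁻¹) (fun v hv => (wAct_mem_wordOrbit_iff σ).mpr hv)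
    (fun v hv => (wAct_mem_wordOrbit_iff σ⁻¹).mpr hv) ?_ ?_ fun v hv => ?_
  · simp only [wAct_wAct, mul_inv_cancel, wAct_one, implies_true]
  · simp only [wAct_wAct, inv_mul_cancel, wAct_one, implies_true]
  · obtain ⟨τ, rfl⟩ := mem_wordOrbit.mp hv
    rw [map_zsmul, act_pureTensor, smul_smul, koszulSign_eq_sortSign_mul_sortSign (hw.wAct τ),
      mul_assoc, ← mul_assoc (sortSign P (wAct w τ)), sortSign_mul_self, one_mul]

lemma sum_wordOrbit_repr_smul [Nontrivial 𝕜] {x : T d} (hx : x ∈ SchurS D d)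
    {w : WordTriple β n d} (hw : IsTri0 P ord w) :
    ∑ v ∈ wordOrbit w, (D.bas d).repr x v • pureTensor D v = (D.bas d).repr x w • xiWord D w := by
  rw [xiWord_eq_sum_wordOrbit, Finset.smul_sum]
  refine Finset.sum_congr rfl fun v hv => ?_
  obtain ⟨σ, rfl⟩ := mem_wordOrbit.mp hv
  rw [repr_wAct_of_mem_SchurS D hx, koszulSign_eq_sortSign_mul_sortSign hw.1, smul_assoc, smul_comm]

lemma mem_span_xiWord [Nontrivial 𝕜] (h2 : (2 : 𝕜) ∈ nonZeroDivisors 𝕜) {x : T d}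
    (hx : x ∈ SchurS D d) :
    x ∈ Submodule.span 𝕜 (xiWord D '' {w : WordTriple β n d | IsTri0 P ord w}) := by
  have hsum : x = ∑ v ∈ ((D.bas d).repr x).support, (D.bas d).repr x v • pureTensor D v := by
    conv_lhs => rw [← (D.bas d).linearCombination_repr x, Finsupp.linearCombination_apply]
    simp only [Finsupp.sum, bas_eq_pureTensor]
  rw [hsum, ← Finset.sum_fiberwise_of_maps_to fun v hv => Finset.mem_image_of_mem (sortWord P) hv]
  refine Submodule.sum_mem _ fun u hu => ?_
  obtain ⟨v₀, hv₀, rfl⟩ := Finset.mem_image.mp hu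
  have hv₀B : IsTriB P v₀.1 v₀.2.1 v₀.2.2 :=
    by_contra fun h => Finsupp.mem_support_iff.mp hv₀ (repr_eq_zero_of_not_isTriB D h2 hx h)
  have hmono := monotone_entryAt_sortWord P v₀
  have hu₀ : IsTri0 P ord (sortWord P v₀) := isTri0_iff.mpr ⟨hv₀B.wAct _, hmono⟩
  have hfiber : ∑ v ∈ ((D.bas d).repr x).support with sortWord P v = sortWord P v₀,
      (D.bas d).repr x v • pureTensor D v = (D.bas d).repr x (sortWord P v₀) •
        xiWord D (sortWord P v₀) := by
    rw [← sum_wordOrbit_repr_smul D hx hu₀]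
    simp only [← mem_wordOrbit_iff_sortWord_eq hmono]
    refine Finset.sum_subset (fun v hv => (Finset.mem_filter.mp hv).2) fun v hv hv' => ?_
    rw [Finsupp.notMem_support_iff.mp fun h => hv' (Finset.mem_filter.mpr ⟨h, hv⟩), zero_smul]
  rw [hfiber]
  exact Submodule.smul_mem _ _ (Submodule.subset_span ⟨_, hu₀, rfl⟩)

lemma SchurS_eq_span_xiWord [Nontrivial 𝕜] (h2 : (2 : 𝕜) ∈ nonZeroDivisors 𝕜) :
    SchurS D d = Submodule.span 𝕜 (xiWord D '' {w : WordTriple β n d | IsTri0 P ord w}) := by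
  refine le_antisymm (fun x hx => mem_span_xiWord D h2 hx) (Submodule.span_le.mpr ?_)
  rintro _ ⟨w, hw, rfl⟩
  exact xiWord_mem_SchurS D hw.1

lemma nabla_smul_pureTensor [Nontrivial 𝕜] (hl : l ≤ d) {v : WordTriple β n d}
    (hv : IsTriB P v.1 v.2.1 v.2.2) :
    nabla D hl (sortSign P v • pureTensor D v) = sortSign P (concatW l hl (sortSplit P hl v)) •
      ((sortSign P (firstW l hl v) • pureTensor D (firstW l hl v)) ⊗ₜ[𝕜]
        (sortSign P (lastW l hl v) • pureTensor D (lastW l hl v))) := by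
  rw [map_zsmul, nabla_pureTensor, ← TensorProduct.smul_tmul', TensorProduct.tmul_smul, smul_smul,
    smul_smul, mul_assoc, sortSign_eq_mul_firstW_lastW hl hv]

lemma nabla_xiWord [Nontrivial 𝕜] (hl : l ≤ d) {w : WordTriple β n d} (hw : IsTri0 P ord w) :
    nabla D hl (xiWord D w) = ∑ p ∈ splitsF P ord l hl w,
      sortSign P (concatW l hl p) • (xiWord D p.1 ⊗ₜ[𝕜] xiWord D p.2) := by
  obtain ⟨hB, hmono⟩ := isTri0_iff.mp hw
  rw [xiWord_of_monotone D hmono, map_sum,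
    ← Finset.sum_fiberwise_of_maps_to fun v hv => sortSplit_mem_splitsF hl hB hv]
  refine Finset.sum_congr rfl fun p hp => ?_
  obtain ⟨-, hp₁, hp₂⟩ := (mem_splitsF hl).mp hp
  rw [xiWord_of_monotone D (isTri0_iff.mp hp₁).2, xiWord_of_monotone D (isTri0_iff.mp hp₂).2,
    TensorProduct.sum_tmul]
  simp only [TensorProduct.tmul_sum]
  rw [← Finset.sum_product', Finset.smul_sum]
  refine Finset.sum_nbij' (fun v => (firstW l hl v, lastW l hl v)) (concatW l hl)
    (fun v hv => ?_) (fun q hq => ?_) (fun v _ => concatW_firstW_lastW hl v)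
    (fun q _ => (concatW_eq_iff hl).mp rfl) fun v hv => ?_
  · exact Finset.mem_product.mpr
      ((mem_wordOrbit_and_sortSplit_eq_iff hl hp).mp (Finset.mem_filter.mp hv))
  · rw [← (concatW_eq_iff hl (p := q)).mp rfl] at hq
    exact Finset.mem_filter.mpr
      ((mem_wordOrbit_and_sortSplit_eq_iff hl hp).mpr (Finset.mem_product.mp hq))
  · obtain ⟨hvw, rfl⟩ := Finset.mem_filter.mp hv
    obtain ⟨σ, rfl⟩ := mem_wordOrbit.mp hvw
    exact nabla_smul_pureTensor D hl (hB.wAct σ)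

lemma nabla_mem_range [Nontrivial 𝕜] (h2 : (2 : 𝕜) ∈ nonZeroDivisors 𝕜) (hl : l ≤ d) {x : T d}
    (hx : x ∈ SchurS D d) : nabla D hl x ∈
      LinearMap.range (TensorProduct.map (SchurS D l).subtype (SchurS D (d - l)).subtype) := by
  rw [SchurS_eq_span_xiWord D h2] at hx
  refine Submodule.span_le (p := (LinearMap.range _).comap (nabla D hl)).mpr ?_ hx
  rintro _ ⟨w, hw, rfl⟩
  rw [SetLike.mem_coe, Submodule.mem_comap, nabla_xiWord D hl hw]
  refine Submodule.sum_mem _ fun p hp => zsmul_mem ?_ _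
  obtain ⟨-, hp₁, hp₂⟩ := (mem_splitsF hl).mp hp
  exact ⟨⟨_, xiWord_mem_SchurS D hp₁.1⟩ ⊗ₜ ⟨_, xiWord_mem_SchurS D hp₂.1⟩, rfl⟩

end Coproduct

theorem statement4_general {𝕜 A β : Type} [CommRing 𝕜] [Nontrivial 𝕜]
    (h2 : (2 : 𝕜) ∈ nonZeroDivisors 𝕜) [NonUnitalRing A] [Module 𝕜 A]
    {n : ℕ} {T : ℕ → Type} [∀ e, NonUnitalRing (T e)] [∀ e, Module 𝕜 (T e)]
    (P : GoodPair 𝕜 A β) (D : Tower 𝕜 A β n T P) (ord : LinearOrder (A × Fin n × Fin n))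
    (d l : ℕ) (hl : l ≤ d) (w : WordTriple β n d) (hw : IsTri0 P ord w)
    (sig : WordTriple β n l × WordTriple β n (d - l) → Equiv.Perm (Fin d))
    (hsig : ∀ p ∈ splitsF P ord l hl w, wAct w (sig p) = concatW l hl p) :
    (D.nab l (d - l)
        (tcast (𝕜 := 𝕜) (show d = l + (d - l) by omega) (xiB D ord w.1 w.2.1 w.2.2)) =
      ∑ p ∈ splitsF P ord l hl w,
        ((-1 : ℤ) ^ sgnc P.od (sig p) (fun k => P.bas (w.1 k))) •
          (xiB D ord p.1.1 p.1.2.1 p.1.2.2 ⊗ₜ[𝕜] xiB D ord p.2.1 p.2.2.1 p.2.2.2)) ∧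
    (∀ x ∈ SchurS D d, D.nab l (d - l) (tcast (𝕜 := 𝕜) (show d = l + (d - l) by omega) x) ∈
      LinearMap.range (TensorProduct.map (SchurS D l).subtype (SchurS D (d - l)).subtype)) := by
  refine ⟨(nabla_xiWord D hl hw).trans (Finset.sum_congr rfl fun p hp => ?_),
    fun x hx => nabla_mem_range D h2 hl hx⟩
  have hsign : koszulSign P (sig p) w = sortSign P (concatW l hl p) := by
    rw [koszulSign_eq_sortSign_mul_sortSign hw.1, sortSign_of_monotone (isTri0_iff.mp hw).2,
      one_mul, hsig p hp]
  exact congrArg (· • _) hsign.symm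

/-- For `T = (𝐛,𝐫,𝐬) ∈ Tri^B_0(n,d)` and each `l ≤ d`, the `(l, d-l)`-th
component of the deconcatenation coproduct satisfies
`∇(ξ_T) = Σ_{(T¹,T²) ∈ Spl_l(T)} (−1)^{⟨σ^T_{T¹,T²};𝐛⟩} ξ_{T¹} ⊗ ξ_{T²}`, where
`σ^T_{T¹,T²}` is the (shortest) coset representative with `T·σ = T¹T²` (given as the data
`sig` with the properties `hsig`).  In particular each component of `∇` maps `S^A(n,d)` into
`S^A(n,l) ⊗ S^A(n,d−l)`, so `S^A(n) = ⊕_d S^A(n,d)` is a sub-supercoalgebra of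
`⊕_d M_n(A)^{⊗d}`. -/
theorem statement4 {𝕜 A β : Type} [CommRing 𝕜] [IsDomain 𝕜] [CharZero 𝕜]
    [NonUnitalRing A] [Module 𝕜 A] [SMulCommClass 𝕜 A A] [IsScalarTower 𝕜 A A]
    {n : ℕ} (hn : 0 < n) {T : ℕ → Type} [∀ e, NonUnitalRing (T e)] [∀ e, Module 𝕜 (T e)]
    (P : GoodPair 𝕜 A β) (D : Tower 𝕜 A β n T P) (ord : LinearOrder (A × Fin n × Fin n))
    (d l : ℕ) (hl : l ≤ d)
    (w : WordTriple β n d) (hw : IsTri0 P ord w)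
    (sig : WordTriple β n l × WordTriple β n (d - l) → Equiv.Perm (Fin d))
    (hsig : ∀ p ∈ splitsF P ord l hl w,
      wAct w (sig p) = concatW l hl p ∧
        ∀ σ : Equiv.Perm (Fin d), wAct w σ = concatW l hl p → invCount (sig p) ≤ invCount σ) :
    (D.nab l (d - l)
        (tcast (𝕜 := 𝕜) (show d = l + (d - l) by omega) (xiB D ord w.1 w.2.1 w.2.2)) =
      ∑ p ∈ splitsF P ord l hl w,
        ((-1 : ℤ) ^ sgnc P.od (sig p) (fun k => P.bas (w.1 k))) •
          (xiB D ord p.1.1 p.1.2.1 p.1.2.2 ⊗ₜ[𝕜] xiB D ord p.2.1 p.2.2.1 p.2.2.2)) ∧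
    (∀ x ∈ SchurS D d, D.nab l (d - l) (tcast (𝕜 := 𝕜) (show d = l + (d - l) by omega) x) ∈
      LinearMap.range (TensorProduct.map (SchurS D l).subtype (SchurS D (d - l)).subtype)) :=
  statement4_general (mem_nonZeroDivisors_of_ne_zero two_ne_zero) P D ord d l hl w hw sig
    fun p hp => (hsig p hp).1

end GS
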